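/- arXiv:1911.01302 — 2 statements merged into one kernel-verified Lean document; each statement's English description precedes it below -/
import Mathlib

section
/- Let N = (N_n)_{n∈ℕ} be a log-convex sequence of positive real numbers with N_0 = 1. Then ∑_{n=1}^∞ 1/N_n^{1/n} ≤ e · ∑_{n=1}^∞ N_{n-1}/N_n (an inequality between values in [0,∞]). -/
/-!
Carleman's inequality, after Pólya: apply the inequality of arithmetic and geometric means not to
`a 0, …, a n` but to `w 0 * a 0, …, w n * a n`, with weights chosen so that
`w 0 * ⋯ * w n = (n + 2) ^ (n + 1)`. The geometric mean of the `a i` is then at most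
`(1 / (n + 1) - 1 / (n + 2)) * ∑ i ≤ n, w i * a i`, and after summation over `n` the differences
telescope, leaving the coefficient `w i / (i + 1) = (1 + 1 / (i + 1)) ^ (i + 1) ≤ e` at `a i`.
For `a n = N n / N (n + 1)` the products telescope to `1 / N (n + 1)`.
-/

open Finset
open scoped ENNReal

/-- The weights of Pólya's proof of Carleman's inequality: the `i`-th one is the ratio of the
consecutive terms `(i + 1) ^ i` and `(i + 2) ^ (i + 1)` of the sequence of their products. -/
noncomputable def carlemanWeight (i : ℕ) : ℝ :=
  ((i : ℝ) + 2) ^ (i + 1) / ((i : ℝ) + 1) ^ i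

namespace carlemanWeight

theorem nonneg (i : ℕ) : 0 ≤ carlemanWeight i := by
  unfold carlemanWeight
  positivity

theorem prod_range (n : ℕ) : ∏ i ∈ range n, carlemanWeight i = ((n : ℝ) + 1) ^ n := by
  refine prod_range_induction _ (fun n : ℕ ↦ ((n : ℝ) + 1) ^ n) (by simp) n fun k _ ↦ ?_
  rw [carlemanWeight, mul_div_cancel₀ _ (by positivity)]
  push_cast
  ring

theorem inv_mul_eq (i : ℕ) :
    ((i : ℝ) + 1)⁻¹ * carlemanWeight i = (1 + ((i : ℝ) + 1)⁻¹) ^ (i + 1) := by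
  have h : 1 + ((i : ℝ) + 1)⁻¹ = (i + 2) / (i + 1) := by field_simp; ring
  rw [h, carlemanWeight, div_pow, pow_succ ((i : ℝ) + 1) i]
  field_simp

theorem inv_mul_le_exp_one (i : ℕ) : ((i : ℝ) + 1)⁻¹ * carlemanWeight i ≤ Real.exp 1 := by
  rw [inv_mul_eq]
  exact_mod_cast Real.one_add_inv_pow_le_exp (n := i + 1)

end carlemanWeight

theorem sum_range_sub_mul_sum_range {R : Type*} [CommRing R] (b x : ℕ → R) (m : ℕ) :
    ∑ n ∈ range m, (b n - b (n + 1)) * ∑ i ∈ range (n + 1), x i =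
      ∑ i ∈ range m, b i * x i - b m * ∑ i ∈ range m, x i := by
  induction m with
  | zero => simp
  | succ m ih =>
    simp only [sum_range_succ _ m, ih]
    ring

theorem prod_range_div_succ {K : Type*} [CommGroupWithZero K] {f : ℕ → K}
    (hf : ∀ n, f n ≠ 0) (n : ℕ) :
    ∏ i ∈ range n, f i / f (i + 1) = f 0 / f n := by
  refine prod_range_induction _ (fun n ↦ f 0 / f n) (div_self (hf 0)) n fun k _ ↦ ?_
  rw [div_mul_div_cancel₀ (hf k)]

theorem geom_mean_le_mul_sum_carlemanWeight_mul {a : ℕ → ℝ} (ha : ∀ n, 0 ≤ a n)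
    (n : ℕ) :
    (∏ i ∈ range (n + 1), a i) ^ ((n : ℝ) + 1)⁻¹ ≤
      (((n : ℝ) + 1)⁻¹ - (((n + 1 : ℕ) : ℝ) + 1)⁻¹) *
        ∑ i ∈ range (n + 1), carlemanWeight i * a i := by
  have amgm : (∏ i ∈ range (n + 1), carlemanWeight i * a i) ^ ((n : ℝ) + 1)⁻¹ ≤
      (∑ i ∈ range (n + 1), carlemanWeight i * a i) / ((n : ℝ) + 1) := by
    simpa using Real.geom_mean_le_arith_mean (range (n + 1)) (fun _ ↦ 1)
      (fun i ↦ carlemanWeight i * a i) (fun _ _ ↦ zero_le_one) (by simp [Nat.cast_add_one_pos])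
      (fun i _ ↦ mul_nonneg (carlemanWeight.nonneg i) (ha i))
  have weighted : (∏ i ∈ range (n + 1), carlemanWeight i * a i) ^ ((n : ℝ) + 1)⁻¹ =
      ((n : ℝ) + 2) * (∏ i ∈ range (n + 1), a i) ^ ((n : ℝ) + 1)⁻¹ := by
    rw [prod_mul_distrib, carlemanWeight.prod_range,
      Real.mul_rpow (by positivity) (prod_nonneg fun i _ ↦ ha i), ← Nat.cast_add_one n,
      Real.pow_rpow_inv_natCast (by positivity) n.succ_ne_zero]
    push_cast
    ring
  have coeff : ((n : ℝ) + 1)⁻¹ - (((n + 1 : ℕ) : ℝ) + 1)⁻¹ = 1 / ((n + 1) * (n + 2)) := by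
    push_cast
    field_simp
    ring
  rw [weighted, ← le_div_iff₀' (by positivity), div_div] at amgm
  rwa [coeff, one_div_mul_eq_div]

theorem carleman_sum_range_le {a : ℕ → ℝ} (ha : ∀ n, 0 ≤ a n) (m : ℕ) :
    ∑ n ∈ range m, (∏ i ∈ range (n + 1), a i) ^ ((n : ℝ) + 1)⁻¹ ≤
      Real.exp 1 * ∑ n ∈ range m, a n := by
  have weighted_sum_nonneg : 0 ≤ ∑ i ∈ range m, carlemanWeight i * a i :=
    sum_nonneg fun i _ ↦ mul_nonneg (carlemanWeight.nonneg i) (ha i)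
  calc
    _ ≤ ∑ n ∈ range m, (((n : ℝ) + 1)⁻¹ - (((n + 1 : ℕ) : ℝ) + 1)⁻¹) *
          ∑ i ∈ range (n + 1), carlemanWeight i * a i :=
      sum_le_sum fun n _ ↦ geom_mean_le_mul_sum_carlemanWeight_mul ha n
    _ = ∑ i ∈ range m, ((i : ℝ) + 1)⁻¹ * (carlemanWeight i * a i) -
          ((m : ℝ) + 1)⁻¹ * ∑ i ∈ range m, carlemanWeight i * a i :=
      sum_range_sub_mul_sum_range (fun n ↦ ((n : ℝ) + 1)⁻¹) _ m
    _ ≤ ∑ i ∈ range m, ((i : ℝ) + 1)⁻¹ * (carlemanWeight i * a i) :=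
      sub_le_self _ (by positivity)
    _ ≤ ∑ i ∈ range m, Real.exp 1 * a i := by
      refine sum_le_sum fun i _ ↦ ?_
      rw [← mul_assoc]
      exact mul_le_mul_of_nonneg_right (carlemanWeight.inv_mul_le_exp_one i) (ha i)
    _ = Real.exp 1 * ∑ n ∈ range m, a n := (mul_sum _ _ _).symm

theorem carleman_tsum_le (a : ℕ → ℝ≥0∞) :
    ∑' n : ℕ, (∏ i ∈ range (n + 1), a i) ^ ((n : ℝ) + 1)⁻¹ ≤
      ENNReal.ofReal (Real.exp 1) * ∑' n, a n := by
  by_cases htop : ∃ i, a i = ∞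
  · rw [ENNReal.tsum_eq_top_of_eq_top htop, ENNReal.mul_top (by simp [Real.exp_pos])]
    exact le_top
  push Not at htop
  obtain ⟨b, hb, rfl⟩ : ∃ b : ℕ → ℝ, (∀ n, 0 ≤ b n) ∧ a = fun n ↦ ENNReal.ofReal (b n) :=
    ⟨fun n ↦ (a n).toReal, fun n ↦ ENNReal.toReal_nonneg,
      funext fun n ↦ (ENNReal.ofReal_toReal (htop n)).symm⟩
  have hprod (n : ℕ) : 0 ≤ ∏ i ∈ range (n + 1), b i := prod_nonneg fun i _ ↦ hb i
  refine ENNReal.tsum_le_of_sum_range_le fun m ↦ ?_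
  calc
    _ = ENNReal.ofReal (∑ n ∈ range m, (∏ i ∈ range (n + 1), b i) ^ ((n : ℝ) + 1)⁻¹) := by
      rw [ENNReal.ofReal_sum_of_nonneg fun n _ ↦ Real.rpow_nonneg (hprod n) _]
      refine sum_congr rfl fun n _ ↦ ?_
      rw [← ENNReal.ofReal_prod_of_nonneg fun i _ ↦ hb i,
        ENNReal.ofReal_rpow_of_nonneg (hprod n) (by positivity)]
    _ ≤ ENNReal.ofReal (Real.exp 1 * ∑ n ∈ range m, b n) :=
      ENNReal.ofReal_le_ofReal (carleman_sum_range_le hb m)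
    _ = ENNReal.ofReal (Real.exp 1) * ∑ n ∈ range m, ENNReal.ofReal (b n) := by
      rw [ENNReal.ofReal_mul (Real.exp_pos 1).le, ENNReal.ofReal_sum_of_nonneg fun n _ ↦ hb n]
    _ ≤ _ := by
      gcongr
      exact ENNReal.sum_le_tsum _

theorem stmt_6_general (N : ℕ → ℝ) (hNpos : ∀ n, 0 < N n) (hN0 : N 0 = 1) :
    ∑' n : ℕ, ENNReal.ofReal (1 / (N (n + 1)) ^ (1 / ((n : ℝ) + 1)))
      ≤ ENNReal.ofReal (Real.exp 1) * ∑' n : ℕ, ENNReal.ofReal (N n / N (n + 1)) := by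
  convert carleman_tsum_le fun n ↦ ENNReal.ofReal (N n / N (n + 1)) using 3 with n
  have hNinv : 0 ≤ 1 / N (n + 1) := one_div_nonneg.2 (hNpos _).le
  rw [← ENNReal.ofReal_prod_of_nonneg fun i _ ↦ (div_pos (hNpos i) (hNpos (i + 1))).le,
    prod_range_div_succ (fun n ↦ (hNpos n).ne'), hN0,
    ENNReal.ofReal_rpow_of_nonneg hNinv (by positivity),
    Real.div_rpow zero_le_one (hNpos _).le, Real.one_rpow, one_div ((n : ℝ) + 1)]

theorem stmt_6 (N : ℕ → ℝ) (hNpos : ∀ n, 0 < N n) (hN0 : N 0 = 1)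
    (hlogconvex : ∀ n : ℕ, 1 ≤ n → (N n) ^ 2 ≤ N (n - 1) * N (n + 1)) :
    ∑' n : ℕ, ENNReal.ofReal (1 / (N (n + 1)) ^ (1 / ((n : ℝ) + 1)))
      ≤ ENNReal.ofReal (Real.exp 1) * ∑' n : ℕ, ENNReal.ofReal (N n / N (n + 1)) :=
  stmt_6_general N hNpos hN0
end

section
/- Let [a,b] ⊂ ℝ with a < b, let M = (M_n)_{n∈ℕ} be a log-convex sequence of positive real numbers with M_0 = 1, and let f be an infinitely differentiable function on [a,b] with sup_{t∈[a,b]} |f^(n)(t)| ≤ M_n for all n ∈ ℕ. For n ∈ ℕ and t ∈ [a,b] define B_{f,n}(t) = sup_{j≥n} |f^(j)(t)|/(e^j M_j). Then for every n ∈ ℕ, every integer q > n, and all t, t+τ ∈ [a,b]: B_{f,n}(t+τ) ≤ max(B_{f,n}(t), e^{-q}) · exp(e·|τ|·M_q/M_{q-1}). -/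
open Set

/-- `B_{f,n}(t) = sup_{j ≥ n} |f⁽ʲ⁾(t)|/(eʲ Mⱼ)`. -/
noncomputable def Bfn (a b : ℝ) (M : ℕ → ℝ) (f : ℝ → ℝ) (n : ℕ) (t : ℝ) : ℝ :=
  ⨆ j : {j : ℕ // n ≤ j},
    |iteratedDerivWithin (j : ℕ) f (Icc a b) t| / (Real.exp (j : ℕ) * M j)

/-!
Fix a base point `x` and put `C = max (B_n(x)) e^{-q}`. The derivatives of order `j ≥ n` at `x` are
at most `C e^j M_j`, and so is the `q`-th derivative (`j = q`) on the whole domain. By log-convexity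
these bounds grow by a factor of at most `R = e M_q / M_{q-1}` from each order below `q` to the
next. Now descend from order `q`: if the derivative of order `j + 1` is at most
`C e^{j+1} M_{j+1} exp (R ‖y - x‖)`, hence at most `R C e^j M_j exp (R ‖y - x‖)`, then integrating
along the segment from `x` to `y` bounds the derivative of order `j` by `C e^j M_j exp (R ‖y - x‖)`.
-/

section Comparison

variable {E F : Type*} [NormedAddCommGroup E] [NormedSpace ℝ E] [NormedAddCommGroup F]
  [NormedSpace ℝ F] {s : Set E} {x y : E}

theorem norm_le_mul_exp_of_norm_fderivWithin_le {g : E → F} {K R : ℝ} (hs : Convex ℝ s)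
    (hg : DifferentiableOn ℝ g s) (hgx : ‖g x‖ ≤ K)
    (hg' : ∀ z ∈ s, ‖fderivWithin ℝ g s z‖ ≤ R * (K * Real.exp (R * ‖z - x‖)))
    (hx : x ∈ s) (hy : y ∈ s) : ‖g y‖ ≤ K * Real.exp (R * ‖y - x‖) := by
  let γ : ℝ → E := AffineMap.lineMap x y
  have hγ : MapsTo γ (Icc 0 1) s := fun u hu => hs.lineMap_mem hx hy hu
  have hγ_norm {u : ℝ} (hu : 0 ≤ u) : ‖γ u - x‖ = u * ‖y - x‖ := by
    simp [γ, AffineMap.lineMap_apply, norm_smul, abs_of_nonneg hu]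
  have hderiv (u : ℝ) (hu : u ∈ Icc (0 : ℝ) 1) :
      HasDerivWithinAt (g ∘ γ) (fderivWithin ℝ g s (γ u) (y - x)) (Icc 0 1) u :=
    (hg _ (hγ hu)).hasFDerivWithinAt.comp_hasDerivWithinAt u AffineMap.hasDerivWithinAt_lineMap hγ
  have hcomparison (u : ℝ) : HasDerivAt (fun u => K * Real.exp (R * ‖y - x‖ * u))
      (K * (Real.exp (R * ‖y - x‖ * u) * (R * ‖y - x‖))) u := by
    simpa using (((hasDerivAt_id u).const_mul (R * ‖y - x‖)).exp.const_mul K)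
  have hderiv_le (u : ℝ) (hu : u ∈ Ico (0 : ℝ) 1) : ‖fderivWithin ℝ g s (γ u) (y - x)‖ ≤
      K * (Real.exp (R * ‖y - x‖ * u) * (R * ‖y - x‖)) :=
    calc
      _ ≤ R * (K * Real.exp (R * ‖γ u - x‖)) * ‖y - x‖ :=
        ContinuousLinearMap.le_of_opNorm_le _ (hg' _ (hγ (Ico_subset_Icc_self hu))) _
      _ = _ := by rw [hγ_norm hu.1]; ring_nf
  simpa [γ] using image_norm_le_of_norm_deriv_right_le_deriv_boundary
    (fun u hu => (hderiv u hu).continuousWithinAt)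
    (fun u hu => (hderiv u (Ico_subset_Icc_self hu)).mono_of_mem_nhdsWithin
      (Icc_mem_nhdsGE_of_mem hu))
    (by simpa [γ] using hgx) hcomparison hderiv_le (right_mem_Icc.2 zero_le_one)

theorem norm_iteratedFDerivWithin_le_mul_exp {f : E → F} {v : ℕ → ℝ} {R : ℝ} {n q : ℕ}
    (hs : Convex ℝ s) (hs' : UniqueDiffOn ℝ s) (hf : ContDiffOn ℝ q f s) (hnq : n ≤ q)
    (hR : 0 ≤ R) (hv : ∀ j, n ≤ j → j < q → v (j + 1) ≤ R * v j)
    (hfx : ∀ j, n ≤ j → j < q → ‖iteratedFDerivWithin ℝ j f s x‖ ≤ v j)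
    (hfq : ∀ z ∈ s, ‖iteratedFDerivWithin ℝ q f s z‖ ≤ v q) (hx : x ∈ s) (hy : y ∈ s) :
    ‖iteratedFDerivWithin ℝ n f s y‖ ≤ v n * Real.exp (R * ‖y - x‖) := by
  suffices h : ∀ z ∈ s, ‖iteratedFDerivWithin ℝ n f s z‖ ≤ v n * Real.exp (R * ‖z - x‖) from h y hy
  refine Nat.decreasingInduction' (fun j hjq hnj ih z hz => ?_) hnq fun z hz => ?_
  · refine norm_le_mul_exp_of_norm_fderivWithin_le hs
      (hf.differentiableOn_iteratedFDerivWithin (by exact_mod_cast hjq) hs')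
      (hfx j hnj hjq) (fun w hw => ?_) hx hz
    calc
      ‖fderivWithin ℝ (iteratedFDerivWithin ℝ j f s) s w‖
          = ‖iteratedFDerivWithin ℝ (j + 1) f s w‖ := norm_fderivWithin_iteratedFDerivWithin
      _ ≤ v (j + 1) * Real.exp (R * ‖w - x‖) := ih w hw
      _ ≤ R * v j * Real.exp (R * ‖w - x‖) := by gcongr; exact hv j hnj hjq
      _ = R * (v j * Real.exp (R * ‖w - x‖)) := mul_assoc _ _ _
  · have hvq : 0 ≤ v q := (norm_nonneg _).trans (hfq z hz)
    exact (hfq z hz).trans (le_mul_of_one_le_right hvq (Real.one_le_exp (by positivity)))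

end Comparison

section TailSup

variable {E F : Type*} [NormedAddCommGroup E] [NormedSpace ℝ E] [NormedAddCommGroup F]
  [NormedSpace ℝ F]

/-- The supremum `sup_{j ≥ n} ‖Dʲf(x)‖ / w j` over all orders `j ≥ n` of the derivatives of `f`
within `s`, relative to the weights `w`; it takes the junk value `0` if the quotients are unbounded.
For `s = Icc a b` and `w j = eʲ Mⱼ` it is `B_{f,n}`. -/
noncomputable def derivTailSup (w : ℕ → ℝ) (f : E → F) (s : Set E) (n : ℕ) (x : E) : ℝ :=
  ⨆ j : {j : ℕ // n ≤ j}, ‖iteratedFDerivWithin ℝ j f s x‖ / w j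

variable {w : ℕ → ℝ} {f : E → F} {s : Set E} {x y : E} {c : ℝ} {n q : ℕ}

theorem norm_iteratedFDerivWithin_le_derivTailSup_mul (hw : ∀ j, 0 < w j)
    (hbound : ∀ j, q ≤ j → ‖iteratedFDerivWithin ℝ j f s x‖ ≤ c * w j) {j : ℕ} (hnj : n ≤ j) :
    ‖iteratedFDerivWithin ℝ j f s x‖ ≤ derivTailSup w f s n x * w j := by
  let ratio (j : ℕ) : ℝ := ‖iteratedFDerivWithin ℝ j f s x‖ / w j
  have hbdd : BddAbove (range ratio) :=
    (Filter.isBoundedUnder_of_eventually_le <| Filter.eventually_atTop.2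
      ⟨q, fun j hj => (div_le_iff₀ (hw j)).2 (hbound j hj)⟩).bddAbove_range
  have hbdd_tail : BddAbove (range fun j : {j : ℕ // n ≤ j} => ratio j) :=
    hbdd.mono (range_comp_subset_range Subtype.val ratio)
  exact (div_le_iff₀ (hw j)).1 (le_ciSup hbdd_tail ⟨j, hnj⟩)

theorem derivTailSup_le_max_mul_exp {R : ℝ} (hs : Convex ℝ s) (hs' : UniqueDiffOn ℝ s)
    (hf : ContDiffOn ℝ (⊤ : ℕ∞) f s) (hw : ∀ j, 0 < w j) (hR : 0 ≤ R)
    (hwR : ∀ j, n ≤ j → j < q → w (j + 1) ≤ R * w j)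
    (hbound : ∀ j, q ≤ j → ∀ z ∈ s, ‖iteratedFDerivWithin ℝ j f s z‖ ≤ c * w j)
    (hx : x ∈ s) (hy : y ∈ s) :
    derivTailSup w f s n y ≤ max (derivTailSup w f s n x) c * Real.exp (R * ‖y - x‖) := by
  set C := max (derivTailSup w f s n x) c
  have hfar (j : ℕ) (hj : q ≤ j) (z : E) (hz : z ∈ s) :
      ‖iteratedFDerivWithin ℝ j f s z‖ ≤ C * w j :=
    (hbound j hj z hz).trans (mul_le_mul_of_nonneg_right (le_max_right _ _) (hw j).le)
  have hbase (j : ℕ) (hj : n ≤ j) : ‖iteratedFDerivWithin ℝ j f s x‖ ≤ C * w j :=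
    (norm_iteratedFDerivWithin_le_derivTailSup_mul hw (fun i hi => hbound i hi x hx) hj).trans
      (mul_le_mul_of_nonneg_right (le_max_left _ _) (hw j).le)
  have hC : 0 ≤ C := nonneg_of_mul_nonneg_left ((norm_nonneg _).trans (hbase n le_rfl)) (hw n)
  have : Nonempty {j : ℕ // n ≤ j} := ⟨⟨n, le_rfl⟩⟩
  refine ciSup_le fun ⟨j, hnj⟩ => ?_
  rw [div_le_iff₀ (hw j), mul_right_comm]
  -- Starting the descent at `max j q` also covers the orders `j ≥ q`.
  refine norm_iteratedFDerivWithin_le_mul_exp (v := fun i => C * w i) (q := max j q) hs hs'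
    (hf.of_le (by exact_mod_cast le_top)) (le_max_left j q) hR (fun i hji hi => ?_)
    (fun i hji _ => hbase i (hnj.trans hji)) (hfar _ (le_max_right j q)) hx hy
  have hiq : i < q := (lt_max_iff.1 hi).resolve_left hji.not_gt
  calc
    C * w (i + 1) ≤ C * (R * w i) := by gcongr; exact hwR i (hnj.trans hji) hiq
    _ = R * (C * w i) := mul_left_comm _ _ _

end TailSup

theorem monotone_succ_div_of_sq_le_mul {M : ℕ → ℝ} (hM : ∀ n, 0 < M n)
    (hlogconvex : ∀ n, M (n + 1) ^ 2 ≤ M n * M (n + 2)) :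
    Monotone fun n => M (n + 1) / M n := by
  refine monotone_nat_of_le_succ fun n => ?_
  rw [div_le_div_iff₀ (hM n) (hM (n + 1)), ← sq, mul_comm]
  exact hlogconvex n

theorem stmt_13_general {E F : Type*} [NormedAddCommGroup E] [NormedSpace ℝ E]
    [NormedAddCommGroup F] [NormedSpace ℝ F] {s : Set E} (hs : Convex ℝ s)
    (hs' : UniqueDiffOn ℝ s) {M : ℕ → ℝ} (hM : ∀ n, 0 < M n)
    (hlogconvex : ∀ n, M (n + 1) ^ 2 ≤ M n * M (n + 2)) {f : E → F}
    (hf : ContDiffOn ℝ (⊤ : ℕ∞) f s)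
    (hbound : ∀ n, ∀ x ∈ s, ‖iteratedFDerivWithin ℝ n f s x‖ ≤ M n)
    (n q : ℕ) {x y : E} (hx : x ∈ s) (hy : y ∈ s) :
    derivTailSup (fun j => Real.exp j * M j) f s n y ≤
      max (derivTailSup (fun j => Real.exp j * M j) f s n x) (Real.exp (-(q + 1 : ℕ))) *
        Real.exp (Real.exp 1 * ‖y - x‖ * (M (q + 1) / M q)) := by
  have hratio (j : ℕ) (hj : j < q + 1) : M (j + 1) ≤ M (q + 1) / M q * M j :=
    (div_le_iff₀ (hM j)).1 <|
      monotone_succ_div_of_sq_le_mul hM hlogconvex (Nat.le_of_lt_succ hj)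
  have hR : 0 ≤ Real.exp 1 * (M (q + 1) / M q) :=
    mul_nonneg (Real.exp_pos 1).le (div_pos (hM _) (hM _)).le
  rw [mul_right_comm]
  refine derivTailSup_le_max_mul_exp (q := q + 1) hs hs' hf
    (fun j => mul_pos (Real.exp_pos j) (hM j)) hR (fun j _ hj => ?_) (fun j hj z hz => ?_) hx hy
  · calc
      Real.exp (j + 1 : ℕ) * M (j + 1) ≤ Real.exp (j + 1 : ℕ) * (M (q + 1) / M q * M j) := by
        gcongr; exact hratio j hj
      _ = Real.exp 1 * (M (q + 1) / M q) * (Real.exp j * M j) := by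
        rw [Nat.cast_succ, Real.exp_add]; ring
  · calc
      ‖iteratedFDerivWithin ℝ j f s z‖ ≤ M j := hbound j z hz
      _ = Real.exp (-j) * (Real.exp j * M j) := by
        rw [← mul_assoc, ← Real.exp_add, neg_add_cancel, Real.exp_zero, one_mul]
      _ ≤ Real.exp (-(q + 1 : ℕ)) * (Real.exp j * M j) := by
        have := hM j
        gcongr

theorem Bfn_eq_derivTailSup (a b : ℝ) (M : ℕ → ℝ) (f : ℝ → ℝ) :
    Bfn a b M f = derivTailSup (fun j => Real.exp j * M j) f (Icc a b) := by
  ext n t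
  simp only [Bfn, derivTailSup, norm_iteratedFDerivWithin_eq_norm_iteratedDerivWithin,
    Real.norm_eq_abs]

theorem stmt_13 (a b : ℝ) (hab : a < b) (M : ℕ → ℝ) (hMpos : ∀ n, 0 < M n)
    (hM0 : M 0 = 1)
    (hlogconvex : ∀ n : ℕ, 1 ≤ n → (M n) ^ 2 ≤ M (n - 1) * M (n + 1))
    (f : ℝ → ℝ) (hf : ContDiffOn ℝ (⊤ : ℕ∞) f (Icc a b))
    (hbound : ∀ n : ℕ, ∀ t ∈ Icc a b, |iteratedDerivWithin n f (Icc a b) t| ≤ M n) :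
    ∀ (n q : ℕ), n < q → ∀ t τ : ℝ, t ∈ Icc a b → t + τ ∈ Icc a b →
      Bfn a b M f n (t + τ) ≤
        max (Bfn a b M f n t) (Real.exp (-(q : ℝ))) *
          Real.exp (Real.exp 1 * |τ| * (M q / M (q - 1))) := by
  rintro n (_ | q) hnq t τ ht htτ
  · contradiction
  · simpa [Bfn_eq_derivTailSup] using stmt_13_general (convex_Icc a b) (uniqueDiffOn_Icc hab) hMpos
      (fun n => hlogconvex (n + 1) n.succ_pos) hf
      (by simpa only [norm_iteratedFDerivWithin_eq_norm_iteratedDerivWithin, Real.norm_eq_abs]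
        using hbound)
      n q ht htτ
end
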